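/- Let f : 𝖱^n → 𝖱 be continuous, let I ⊆ N = {1,…,n} be nonempty, and suppose f is I-cofinal. Then for every c ∈ 𝖱 there exists d̃ ∈ 𝖱 such that for every b ∈ [0,c]^{N∖I}, f(Δ_I(b) ∩ M_I(d̃)) ⊆ [c, ω₁). -/

import Mathlib

noncomputable section
open Set

/-- The first uncountable ordinal `ω₁`. -/
def Omega1 : Ordinal := Ordinal.omega 1

/-- The closed long ray `𝖱`: `ω₁ × [0,1)` with the lexicographic order. -/
def LongRay : Type 1 := {o : Ordinal // o < Omega1} ×ₗ (Set.Ico (0:ℝ) 1)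

instance : LinearOrder LongRay :=
  inferInstanceAs (LinearOrder ({o : Ordinal // o < Omega1} ×ₗ (Set.Ico (0:ℝ) 1)))

/-- `𝖱` carries the order topology. -/
instance : TopologicalSpace LongRay := Preorder.topology LongRay
instance : OrderTopology LongRay := ⟨rfl⟩

lemma omega1_pos : (0 : Ordinal) < Omega1 := Ordinal.omega_pos 1

/-- The point `0 = (0,0)` of the long ray. -/
def rayZero : LongRay := toLex (⟨0, omega1_pos⟩, ⟨0, by simp⟩)

/-- Identification of the countable ordinal `o` with the point `(o,0)` of the long ray
(junk value for `o ≥ ω₁`). -/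
def ordR (o : Ordinal) : LongRay :=
  if h : o < Omega1 then toLex (⟨o, h⟩, ⟨0, by simp⟩) else rayZero

/-- The `I`-diagonal at height `c` (only the values of `c` off `I` are relevant). -/
def Delta (n : ℕ) (I : Finset (Fin n)) (c : Fin n → LongRay) : Set (Fin n → LongRay) :=
  {x | (∀ i ∈ I, ∀ i' ∈ I, x i = x i') ∧ ∀ j ∉ I, x j = c j}

/-- `f` is `I`-cofinal if `f` restricted to `Δ_I = Δ_I(0)` is unbounded. -/
def ICofinal (n : ℕ) (f : (Fin n → LongRay) → LongRay) (I : Finset (Fin n)) : Prop :=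
  ¬ BddAbove (f '' Delta n I (fun _ => rayZero))

/-- The cofinality class `𝔠(f) = {I : f is I-cofinal}`. -/
def cofClass (n : ℕ) (f : (Fin n → LongRay) → LongRay) : Set (Finset (Fin n)) :=
  {I | ICofinal n f I}

/-- `M_I(c) = {x : x_i ≥ c for all i ∈ I}`. -/
def MSet (n : ℕ) (I : Finset (Fin n)) (c : LongRay) : Set (Fin n → LongRay) :=
  {x | ∀ i ∈ I, c ≤ x i}

/-- `E_I(b,d) = {x ∈ M_I(d) : x_j = b_j for all j ∉ I}`. -/
def ESet (n : ℕ) (I : Finset (Fin n)) (b : Fin n → LongRay) (d : LongRay) :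
    Set (Fin n → LongRay) :=
  {x | (∀ i ∈ I, d ≤ x i) ∧ ∀ j ∉ I, x j = b j}

namespace LongRay

lemma lt_iff {x y : LongRay} :
    x < y ↔ (ofLex x).1 < (ofLex y).1 ∨ (ofLex x).1 = (ofLex y).1 ∧ (ofLex x).2 < (ofLex y).2 :=
  Prod.Lex.lt_iff

lemma le_iff {x y : LongRay} :
    x ≤ y ↔ (ofLex x).1 < (ofLex y).1 ∨ (ofLex x).1 = (ofLex y).1 ∧ (ofLex x).2 ≤ (ofLex y).2 :=
  Prod.Lex.le_iff

/-- The point `(o, r)` of the long ray. -/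
def mk (o : {o : Ordinal // o < Omega1}) (r : Set.Ico (0 : ℝ) 1) : LongRay := toLex (o, r)

@[simp] lemma ofLex_mk (o : {o : Ordinal // o < Omega1}) (r : Set.Ico (0 : ℝ) 1) :
    ofLex (mk o r) = (o, r) := rfl

lemma rayZero_le (x : LongRay) : rayZero ≤ x := by
  rw [le_iff]
  rcases eq_or_lt_of_le (show (⟨0, omega1_pos⟩ : {o : Ordinal // o < Omega1}) ≤ (ofLex x).1 from
    zero_le (a := ((ofLex x).1 : Ordinal))) with h | h
  · exact Or.inr ⟨h, (ofLex x).2.2.1⟩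
  · exact Or.inl h

lemma succ_lt_Omega1 {o : Ordinal} (h : o < Omega1) : Order.succ o < Omega1 := by
  rw [Omega1, ← Cardinal.ord_aleph] at h ⊢
  exact (Cardinal.isSuccLimit_ord (Cardinal.aleph0_le_aleph 1)).succ_lt h

lemma bddAbove_of_countable {s : Set LongRay} (hs : s.Countable) : BddAbove s := by
  have := hs.to_subtype
  have h : (⨆ x : s, ((ofLex x.1).1 : Ordinal)) < Omega1 :=
    Ordinal.iSup_lt_omega_one fun x => (ofLex x.1).1.2
  refine ⟨mk ⟨_, succ_lt_Omega1 h⟩ ⟨0, by simp⟩, fun x hx => le_iff.2 (Or.inl ?_)⟩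
  exact Order.lt_succ_of_le
    (le_ciSup (f := fun x : s => ((ofLex x.1).1 : Ordinal)) Ordinal.bddAbove_of_small ⟨x, hx⟩)

instance : NoMaxOrder LongRay where
  exists_gt x := ⟨mk ⟨_, succ_lt_Omega1 (ofLex x).1.2⟩ ⟨0, by simp⟩,
    lt_iff.2 (Or.inl (Order.lt_succ (α := Ordinal) _))⟩

/-- Between any two points of the long ray there is one with rational second coordinate and the
same first coordinate as the smaller point. -/
lemma exists_rat_between {x y : LongRay} (h : x < y) :
    ∃ (q : ℚ) (hq : (q : ℝ) ∈ Set.Ico (0 : ℝ) 1), x < mk (ofLex x).1 ⟨q, hq⟩ ∧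
      mk (ofLex x).1 ⟨q, hq⟩ < y := by
  rcases lt_iff.1 h with h | ⟨h, h'⟩
  · obtain ⟨q, hq, hq'⟩ := exists_rat_btwn (ofLex x).2.2.2
    exact ⟨q, ⟨(ofLex x).2.2.1.trans hq.le, hq'⟩, lt_iff.2 (Or.inr ⟨rfl, hq⟩), lt_iff.2 (Or.inl h)⟩
  · obtain ⟨q, hq, hq'⟩ := exists_rat_btwn (show ((ofLex x).2 : ℝ) < (ofLex y).2 from h')
    exact ⟨q, ⟨(ofLex x).2.2.1.trans hq.le, hq'.trans (ofLex y).2.2.2⟩,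
      lt_iff.2 (Or.inr ⟨rfl, hq⟩), lt_iff.2 (Or.inr ⟨h, hq'⟩)⟩

instance : DenselyOrdered LongRay where
  dense _ _ h := let ⟨_, _, h₁, h₂⟩ := exists_rat_between h; ⟨_, h₁, h₂⟩

lemma countable_Iic_ordinal {o : Ordinal} (h : o < Omega1) : (Set.Iic o).Countable := by
  have h' : Order.succ o < Ordinal.omega 1 := succ_lt_Omega1 h
  rw [← Order.Iio_succ, ← Cardinal.le_aleph0_iff_set_countable, Cardinal.mk_Iio_ordinal,
    Cardinal.lift_le_aleph0]
  rw [← Cardinal.ord_aleph, Cardinal.lt_ord] at h'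
  rw [← Cardinal.succ_aleph0] at h'
  exact Order.lt_succ_iff.1 h'

lemma isSeparable_Iic (c : LongRay) : TopologicalSpace.IsSeparable (Set.Iic c) := by
  have hc : {o : {o : Ordinal // o < Omega1} | o ≤ (ofLex c).1}.Countable :=
    ((countable_Iic_ordinal (ofLex c).1.2).preimage Subtype.val_injective)
  have hq : {r : Set.Ico (0 : ℝ) 1 | (r : ℝ) ∈ Set.range ((↑) : ℚ → ℝ)}.Countable :=
    (Set.countable_range _).preimage Subtype.val_injective
  refine ⟨_, (hc.prod hq).image fun p => mk p.1 p.2, fun x hx => mem_closure_iff_nhds.2 ?_⟩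
  intro t ht
  obtain ⟨u, hu⟩ := exists_gt x
  obtain ⟨v, hv, hvt⟩ := exists_Ico_subset_of_mem_nhds ht ⟨u, hu⟩
  obtain ⟨q, hq, h₁, h₂⟩ := exists_rat_between hv
  refine ⟨_, hvt ⟨h₁.le, h₂⟩, ((ofLex x).1, ⟨q, hq⟩), ⟨?_, ⟨q, rfl⟩⟩, rfl⟩
  rcases le_iff.1 hx with h | h
  · exact h.le
  · exact h.1.le

lemma exists_isLUB {s : Set LongRay} (hs : BddAbove s) : ∃ x, IsLUB s x := by
  obtain ⟨o, ⟨u, hu, huo⟩, hmin⟩ := WellFounded.has_min (wellFounded_lt)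
    ((fun x : LongRay => (ofLex x).1) '' upperBounds s) (hs.image _)
  set R : Set ℝ := {r | ∃ h : r ∈ Set.Ico (0 : ℝ) 1, mk o ⟨r, h⟩ ∈ upperBounds s}
  have huR : ((ofLex u).2 : ℝ) ∈ R := ⟨(ofLex u).2.2, by rw [← huo]; exact hu⟩
  have hbdd : BddBelow R := ⟨0, fun r hr => hr.1.1⟩
  have h0 : sInf R ∈ Set.Ico (0 : ℝ) 1 :=
    ⟨le_csInf ⟨_, huR⟩ fun r hr => hr.1.1, (csInf_le hbdd huR).trans_lt (ofLex u).2.2.2⟩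
  refine ⟨mk o ⟨_, h0⟩, fun x hx => ?_, fun y hy => ?_⟩
  · by_contra! hlt
    rcases lt_iff.1 hlt with h | ⟨h, h'⟩
    · rcases le_iff.1 (hu hx) with h₂ | h₂
      · exact lt_asymm h (huo ▸ h₂)
      · exact h.ne (huo.symm.trans h₂.1.symm)
    · obtain ⟨r, ⟨hr, hrs⟩, hrx⟩ := exists_lt_of_csInf_lt ⟨_, huR⟩
        (show sInf R < ((ofLex x).2 : ℝ) from h')
      exact (hrs hx).not_gt (lt_iff.2 (Or.inr ⟨h, hrx⟩))
  · rcases (not_lt.1 (hmin _ ⟨y, hy, rfl⟩)).lt_or_eq with h | h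
    · exact le_iff.2 (Or.inl h)
    · exact le_iff.2 (Or.inr ⟨h, csInf_le hbdd ⟨(ofLex y).2.2, by rw [h]; exact hy⟩⟩)

open scoped Classical in
local instance : SupSet LongRay where
  sSup s := if h : BddAbove s then (exists_isLUB h).choose else rayZero

lemma isLUB_sSup_of_bddAbove {s : Set LongRay} (hs : BddAbove s) : IsLUB s (sSup s) := by
  simp only [sSup, dif_pos hs]
  exact (exists_isLUB hs).choose_spec

local instance : ConditionallyCompleteLinearOrder LongRay where
  __ := (inferInstance : LinearOrder LongRay)
  __ := conditionallyCompleteLatticeOfLatticeOfsSup LongRay fun _ hs _ => isLUB_sSup_of_bddAbove hs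
  csSup_of_not_bddAbove s hs := by
    have h : IsLUB (∅ : Set LongRay) (sSup ∅) := isLUB_sSup_of_bddAbove ⟨rayZero, by simp⟩
    refine Eq.trans ?_ (le_antisymm (rayZero_le _) (h.2 (by simp)))
    simp only [sSup, dif_neg hs]
  csInf_of_not_bddBelow s hs := (hs ⟨rayZero, fun x _ => rayZero_le x⟩).elim

lemma isPreconnected_Iic (c : LongRay) : IsPreconnected (Set.Iic c) :=
  _root_.isPreconnected_Iic

/-- Two closed unbounded subsets of the long ray intersect. -/
lemma inter_nonempty_of_isClosed {A B : Set LongRay} (hA : IsClosed A) (hB : IsClosed B)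
    (hA' : ∀ z, ∃ t ∈ A, z ≤ t) (hB' : ∀ z, ∃ t ∈ B, z ≤ t) : (A ∩ B).Nonempty := by
  choose S hSA hS using hA'
  choose T hTB hT using hB'
  set u : ℕ → LongRay := fun k => (fun z => T (S z))^[k] rayZero
  have hsucc (k : ℕ) : u (k + 1) = T (S (u k)) := Function.iterate_succ_apply' _ _ _
  have hmono : Monotone u := monotone_nat_of_le_succ fun k => by
    rw [hsucc]; exact (hS _).trans (hT _)
  have hlim := tendsto_atTop_ciSup hmono (bddAbove_of_countable (Set.countable_range u))
  have hlim' := hlim.comp (Filter.tendsto_add_atTop_nat 1)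
  refine ⟨_, hA.mem_of_tendsto (tendsto_of_tendsto_of_tendsto_of_le_of_le hlim hlim'
    (fun k => hS (u k)) fun k => ?_) (Filter.Eventually.of_forall fun k => hSA (u k)),
    hB.mem_of_tendsto hlim' (Filter.Eventually.of_forall fun k => ?_)⟩
  · simp only [Function.comp_apply, hsucc]
    exact hT _
  · simp only [Function.comp_apply, hsucc]
    exact hTB _

/-- A continuous unbounded self-map of the long ray tends to infinity. -/
lemma exists_forall_le_of_not_bddAbove {h : LongRay → LongRay} (hh : Continuous h)
    (hunb : ¬ BddAbove (Set.range h)) (c : LongRay) : ∃ d, ∀ t, d ≤ t → c ≤ h t := by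
  by_contra! hcon
  obtain ⟨c', hc'⟩ := exists_gt c
  obtain ⟨t, ht, ht'⟩ := inter_nonempty_of_isClosed (A := {t | h t ≤ c}) (B := {t | c' ≤ h t})
    (isClosed_le hh continuous_const) (isClosed_le continuous_const hh)
    (fun z => let ⟨t, h₁, h₂⟩ := hcon z; ⟨t, h₂.le, h₁⟩) (fun z => by
      by_contra! hz
      obtain ⟨m, hm⟩ := (isCompact_Icc (a := rayZero) (b := z)).bddAbove_image hh.continuousOn
      refine hunb ⟨max m c', ?_⟩
      rintro _ ⟨t, rfl⟩
      rcases le_total t z with htz | htz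
      · exact (hm ⟨t, ⟨rayZero_le t, htz⟩, rfl⟩).trans (le_max_left _ _)
      · refine le_trans (le_of_not_ge fun hle => ?_) (le_max_right _ _)
        exact (hz t hle).not_ge htz)
  exact (hc'.trans_le ht').not_ge ht

/-- A continuous family of self-maps of the long ray with separable connected parameter set, one
of which is unbounded, tends to infinity uniformly. -/
lemma exists_forall_forall_le {X : Type*} [TopologicalSpace X] {g : LongRay → X → LongRay}
    (hg : Continuous fun p : LongRay × X => g p.1 p.2) {K : Set X} (hK : IsPreconnected K)
    (hKs : TopologicalSpace.IsSeparable K) {x₀ : X} (hx₀ : x₀ ∈ K)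
    (hunb : ¬ BddAbove (Set.range fun t => g t x₀)) (c : LongRay) :
    ∃ d, ∀ x ∈ K, ∀ t, d ≤ t → c ≤ g t x := by
  have hleft (x : X) : Continuous fun t => g t x := hg.comp (continuous_id.prodMk continuous_const)
  have hright (t : LongRay) : Continuous (g t) := hg.comp (continuous_const.prodMk continuous_id)
  obtain ⟨D, hD, hKD⟩ := hKs
  have hM : ∃ M, ∀ x ∈ D, BddAbove (Set.range fun t => g t x) → ∀ t, g t x ≤ M := by
    have (x : X) : ∃ m, BddAbove (Set.range fun t => g t x) → ∀ t, g t x ≤ m := by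
      by_cases hb : BddAbove (Set.range fun t => g t x)
      · exact ⟨hb.some, fun _ t => hb.some_mem ⟨t, rfl⟩⟩
      · exact ⟨rayZero, fun h => (hb h).elim⟩
    choose m hm using this
    obtain ⟨M, hM⟩ := bddAbove_of_countable (hD.image m)
    exact ⟨M, fun x hx hb t => (hm x hb t).trans (hM ⟨x, hx, rfl⟩)⟩
  obtain ⟨M, hM⟩ := hM
  obtain ⟨c', hc'⟩ := exists_gt (max M c)
  obtain ⟨c'', hc''⟩ := exists_gt c'
  have hE : ∃ d, ∀ x ∈ insert x₀ D, ¬ BddAbove (Set.range fun t => g t x) →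
      ∀ t, d ≤ t → c'' ≤ g t x := by
    have (x : X) : ∃ d, ¬ BddAbove (Set.range fun t => g t x) → ∀ t, d ≤ t → c'' ≤ g t x := by
      by_cases hb : BddAbove (Set.range fun t => g t x)
      · exact ⟨rayZero, fun h => (h hb).elim⟩
      · obtain ⟨d, hd⟩ := exists_forall_le_of_not_bddAbove (hleft x) hb c''
        exact ⟨d, fun _ => hd⟩
    choose e he using this
    obtain ⟨d, hd⟩ := bddAbove_of_countable ((hD.insert x₀).image e)
    exact ⟨d, fun x hx hb t ht => he x hb t ((hd ⟨x, hx, rfl⟩).trans ht)⟩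
  obtain ⟨d, hd⟩ := hE
  refine ⟨d, fun x hx t ht => ?_⟩
  by_contra! hlt
  have hsub : D ⊆ g t ⁻¹' (Set.Iic M ∪ Set.Ici c'') := fun y hy => by
    by_cases hb : BddAbove (Set.range fun t => g t y)
    · exact Or.inl (hM y hy hb t)
    · exact Or.inr (hd y (Set.mem_insert_of_mem _ hy) hb t ht)
  have hcl := closure_minimal hsub ((isClosed_Iic.union isClosed_Ici).preimage (hright t))
  have h₀ : c'' ≤ g t x₀ := hd x₀ (Set.mem_insert _ _) hunb t ht
  obtain ⟨y, hy, hyc⟩ := hK.intermediate_value hx hx₀ (hright t).continuousOn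
    (show c' ∈ Set.Icc (g t x) (g t x₀) from
      ⟨hlt.le.trans ((le_max_right _ _).trans hc'.le), hc''.le.trans h₀⟩)
  rcases hcl (hKD hy) with h | h
  · exact ((le_max_left M c).trans_lt hc').not_ge (hyc ▸ h)
  · exact hc''.not_ge (hyc ▸ h)

end LongRay

/-- if `f` is `I`-cofinal then for every `c` there is `d̃` such that for
every `b ∈ [0,c]^{N∖I}`, `f(Δ_I(b) ∩ M_I(d̃)) ⊆ [c, ω₁)`. -/
theorem cofinal_direction_large (n : ℕ) (f : (Fin n → LongRay) → LongRay)
    (hf : Continuous f) (I : Finset (Fin n)) (hI : I.Nonempty)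
    (hcof : ICofinal n f I) :
    ∀ c : LongRay, ∃ d : LongRay, ∀ b : Fin n → LongRay, (∀ j ∉ I, b j ≤ c) →
      ∀ x ∈ Delta n I b ∩ MSet n I d, c ≤ f x := by
  classical
  intro c
  obtain ⟨i₀, hi₀⟩ := hI
  let g : LongRay → (Fin n → LongRay) → LongRay := fun t b => f fun j => if j ∈ I then t else b j
  have hg : Continuous fun p : LongRay × (Fin n → LongRay) => g p.1 p.2 := by
    refine hf.comp (continuous_pi fun j => ?_)
    by_cases hj : j ∈ I <;> simp only [hj, if_true, if_false] <;> fun_prop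
  have hpoint {b x : Fin n → LongRay} (hx : x ∈ Delta n I b) : f x = g (x i₀) b := by
    refine congrArg f (funext fun j => ?_)
    by_cases hj : j ∈ I
    · simp only [hj, if_true]
      exact hx.1 j hj i₀ hi₀
    · simp only [hj, if_false]
      exact hx.2 j hj
  obtain ⟨d, hd⟩ := LongRay.exists_forall_forall_le hg
    (K := Set.univ.pi fun _ => Set.Iic c) (x₀ := fun _ => rayZero)
    (isPreconnected_univ_pi fun _ => LongRay.isPreconnected_Iic c)
    (TopologicalSpace.IsSeparable.univ_pi fun _ => LongRay.isSeparable_Iic c)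
    (fun _ _ => LongRay.rayZero_le c)
    (fun hb => hcof (hb.mono (by rintro _ ⟨x, hx, rfl⟩; exact ⟨x i₀, (hpoint hx).symm⟩))) c
  refine ⟨d, fun b hb x hx => ?_⟩
  have hx' : x ∈ Delta n I fun j => if j ∈ I then rayZero else b j :=
    ⟨hx.1.1, fun j hj => by simp only [hj, if_false]; exact hx.1.2 j hj⟩
  rw [hpoint hx']
  refine hd _ (fun j _ => ?_) _ (hx.2 i₀ hi₀)
  by_cases hj : j ∈ I
  · simp only [hj, if_true]
    exact LongRay.rayZero_le c
  · simp only [hj, if_false]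
    exact hb j hj
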